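/- arXiv:1904.02236 — 2 statements merged into one kernel-verified Lean document; each statement's English description precedes it below -/
import Mathlib

section
/- Let g₀ be a complete warped Berger metric on ℝ⁴ with bounded curvature and c ≤ b. Then for any s₀ > 0 there exists α > 0 such that |b_s/b|(s) ≤ α for all s ≥ s₀. -/
open Set Filter Topology

noncomputable section

/-- A complete warped Berger metric on `ℝ⁴`,
`g = ds² + b²(s)(σ₁² + σ₂²) + c²(s) σ₃²` in the arclength coordinate `s ∈ (0,∞)`,
given by smooth positive functions `b, c` on `(0,∞)` extending to smooth odd functions
at `s = 0` with `b_s(0) = c_s(0) = 1`, satisfying the Berger ordering `c ≤ b`. -/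
structure WarpedBergerMetric where
  b : ℝ → ℝ
  c : ℝ → ℝ
  smooth_b : ContDiffOn ℝ (⊤ : ℕ∞) b (Ioi 0)
  smooth_c : ContDiffOn ℝ (⊤ : ℕ∞) c (Ioi 0)
  b_pos : ∀ s > 0, 0 < b s
  c_pos : ∀ s > 0, 0 < c s
  /-- Smoothness at the origin: `b → 0` as `s → 0⁺`. -/
  b_origin : Tendsto b (𝓝[>] 0) (𝓝 0)
  c_origin : Tendsto c (𝓝[>] 0) (𝓝 0)
  /-- Smoothness at the origin: `b_s → 1` as `s → 0⁺`. -/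
  bs_origin : Tendsto (deriv b) (𝓝[>] 0) (𝓝 1)
  cs_origin : Tendsto (deriv c) (𝓝[>] 0) (𝓝 1)
  /-- The Berger ordering `c ≤ b`. -/
  ordered : ∀ s > 0, c s ≤ b s

namespace WarpedBergerMetric

variable (g : WarpedBergerMetric)

/-- Sectional curvature `k12 = (4b² − 3c²)/b⁴ − b_s²/b²`. -/
def k12 (s : ℝ) : ℝ :=
  (4 * (g.b s) ^ 2 - 3 * (g.c s) ^ 2) / (g.b s) ^ 4 - (deriv g.b s) ^ 2 / (g.b s) ^ 2
/-- Sectional curvature `k13 = c²/b⁴ − b_s c_s/(b c)`. -/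
def k13 (s : ℝ) : ℝ :=
  (g.c s) ^ 2 / (g.b s) ^ 4 - deriv g.b s * deriv g.c s / (g.b s * g.c s)
/-- Sectional curvature `k01 = −b_ss/b`. -/
def k01 (s : ℝ) : ℝ := -(deriv (deriv g.b) s) / g.b s
/-- Sectional curvature `k03 = −c_ss/c`. -/
def k03 (s : ℝ) : ℝ := -(deriv (deriv g.c) s) / g.c s
/-- `|Rm| = |k12| + |k13| + |k01| + |k03|`. -/
def RmNorm (s : ℝ) : ℝ := |g.k12 s| + |g.k13 s| + |g.k01 s| + |g.k03 s|

/-- Bounded curvature: `|Rm| ≤ α` on `(0,∞)` for some `α > 0`. -/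
def BoundedCurvature : Prop := ∃ α > 0, ∀ s > 0, g.RmNorm s ≤ α

end WarpedBergerMetric

/-!
Bounded curvature makes `k01 = -b_ss / b` bounded below, so `b_ss ≤ k² b` for some `k > 0`. The
Wronskian of `b` with the solution `sinh (k (t - a))` of `y'' = k² y` then has derivative
`(b_ss - k² b) sinh (k (t - a))`, which changes sign from nonnegative to nonpositive at `t = a`.
Hence the Wronskian is maximal at `a`, where it equals `-k b(a) < 0`. Taking `a = s - δ` and
`a = s + δ` bounds `b_s / b` at `s` from above and from below by `± k coth (k δ)`.
-/

lemma isMaxOn_of_hasDerivWithinAt_nonneg_of_nonpos {φ φ' : ℝ → ℝ} {S : Set ℝ} {a : ℝ}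
    (hS : Convex ℝ S) (ha : a ∈ S) (hφ : ∀ x ∈ S, HasDerivWithinAt φ (φ' x) S x)
    (hleft : ∀ x ∈ S, x < a → 0 ≤ φ' x) (hright : ∀ x ∈ S, a < x → φ' x ≤ 0) :
    IsMaxOn φ S a := by
  have hcont : ContinuousOn φ S := fun x hx ↦ (hφ x hx).continuousWithinAt
  have hmono : MonotoneOn φ (S ∩ Iic a) := by
    have hint : interior (S ∩ Iic a) ⊆ S ∩ Iio a := by
      rw [interior_inter, interior_Iic]
      exact inter_subset_inter_left _ interior_subset
    exact monotoneOn_of_hasDerivWithinAt_nonneg (hS.inter (convex_Iic a))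
      (hcont.mono inter_subset_left)
      (fun x hx ↦ (hφ x (hint hx).1).mono (hint.trans inter_subset_left))
      (fun x hx ↦ hleft x (hint hx).1 (hint hx).2)
  have hanti : AntitoneOn φ (S ∩ Ici a) := by
    have hint : interior (S ∩ Ici a) ⊆ S ∩ Ioi a := by
      rw [interior_inter, interior_Ici]
      exact inter_subset_inter_left _ interior_subset
    exact antitoneOn_of_hasDerivWithinAt_nonpos (hS.inter (convex_Ici a))
      (hcont.mono inter_subset_left)
      (fun x hx ↦ (hφ x (hint hx).1).mono (hint.trans inter_subset_left))
      (fun x hx ↦ hright x (hint hx).1 (hint hx).2)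
  intro x hx
  rcases le_total x a with hxa | hax
  · exact hmono ⟨hx, hxa⟩ ⟨ha, self_mem_Iic⟩ hxa
  · exact hanti ⟨ha, self_mem_Ici⟩ ⟨hx, hax⟩ hax

lemma hasDerivWithinAt_wronskian {f f' g g' : ℝ → ℝ} {f'' g'' : ℝ} {S : Set ℝ} {x : ℝ}
    (hf : HasDerivWithinAt f (f' x) S x) (hf' : HasDerivWithinAt f' f'' S x)
    (hg : HasDerivWithinAt g (g' x) S x) (hg' : HasDerivWithinAt g' g'' S x) :
    HasDerivWithinAt (fun t ↦ f' t * g t - f t * g' t) (f'' * g x - f x * g'') S x :=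
  ((hf'.mul hg).sub (hf.mul hg')).congr_deriv (by ring)

lemma hasDerivWithinAt_wronskian_sinh {f f' : ℝ → ℝ} {f'' : ℝ} {S : Set ℝ} {x : ℝ}
    (hf : HasDerivWithinAt f (f' x) S x) (hf' : HasDerivWithinAt f' f'' S x) (k a : ℝ) :
    HasDerivWithinAt
      (fun t ↦ f' t * Real.sinh (k * (t - a)) - f t * (k * Real.cosh (k * (t - a))))
      ((f'' - k ^ 2 * f x) * Real.sinh (k * (x - a))) S x := by
  have hlin : HasDerivWithinAt (fun t ↦ k * (t - a)) k S x := by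
    simpa using ((hasDerivWithinAt_id x S).sub_const a).const_mul k
  have hsinh : HasDerivWithinAt (fun t ↦ Real.sinh (k * (t - a)))
      (k * Real.cosh (k * (x - a))) S x :=
    hlin.sinh.congr_deriv (mul_comm _ _)
  have hcosh : HasDerivWithinAt (fun t ↦ k * Real.cosh (k * (t - a)))
      (k * (Real.sinh (k * (x - a)) * k)) S x :=
    hlin.cosh.const_mul k
  exact (hasDerivWithinAt_wronskian hf hf' hsinh hcosh).congr_deriv (by ring)

section SturmComparison

variable {f f' f'' : ℝ → ℝ} {S : Set ℝ} {k : ℝ}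

lemma deriv_mul_sinh_le_mul_cosh (hS : Convex ℝ S)
    (hf : ∀ x ∈ S, HasDerivWithinAt f (f' x) S x)
    (hf' : ∀ x ∈ S, HasDerivWithinAt f' (f'' x) S x)
    (hk : 0 ≤ k) (hf'' : ∀ x ∈ S, f'' x ≤ k ^ 2 * f x)
    {a s : ℝ} (ha : a ∈ S) (hfa : 0 ≤ f a) (hs : s ∈ S) :
    f' s * Real.sinh (k * (s - a)) ≤ k * f s * Real.cosh (k * (s - a)) := by
  have hmax : IsMaxOn
      (fun t ↦ f' t * Real.sinh (k * (t - a)) - f t * (k * Real.cosh (k * (t - a)))) S a := by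
    refine isMaxOn_of_hasDerivWithinAt_nonneg_of_nonpos hS ha
      (fun x hx ↦ hasDerivWithinAt_wronskian_sinh (hf x hx) (hf' x hx) k a) ?_ ?_
    · intro x hx hxa
      exact mul_nonneg_of_nonpos_of_nonpos (sub_nonpos.2 (hf'' x hx))
        (Real.sinh_nonpos_iff.2 (mul_nonpos_of_nonneg_of_nonpos hk (sub_nonpos.2 hxa.le)))
    · intro x hx hax
      exact mul_nonpos_of_nonpos_of_nonneg (sub_nonpos.2 (hf'' x hx))
        (Real.sinh_nonneg_iff.2 (mul_nonneg hk (sub_nonneg.2 hax.le)))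
  have hle : f' s * Real.sinh (k * (s - a)) - f s * (k * Real.cosh (k * (s - a))) ≤
      -(k * f a) := by
    simpa [mul_comm] using hmax hs
  linarith [mul_nonneg hk hfa]

lemma abs_deriv_div_le_mul_cosh_div_sinh (hS : Convex ℝ S)
    (hf : ∀ x ∈ S, HasDerivWithinAt f (f' x) S x)
    (hf' : ∀ x ∈ S, HasDerivWithinAt f' (f'' x) S x)
    (hpos : ∀ x ∈ S, 0 < f x) (hk : 0 < k) (hf'' : ∀ x ∈ S, f'' x ≤ k ^ 2 * f x)
    {s δ : ℝ} (hδ : 0 < δ) (hleft : s - δ ∈ S) (hright : s + δ ∈ S) :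
    |f' s / f s| ≤ k * Real.cosh (k * δ) / Real.sinh (k * δ) := by
  have hs : s ∈ S := hS.ordConnected.out hleft hright ⟨by linarith, by linarith⟩
  have hsinh : 0 < Real.sinh (k * δ) := Real.sinh_pos_iff.2 (mul_pos hk hδ)
  have hupper : f' s * Real.sinh (k * δ) ≤ k * f s * Real.cosh (k * δ) := by
    simpa using deriv_mul_sinh_le_mul_cosh hS hf hf' hk.le hf'' hleft (hpos _ hleft).le hs
  have hlower : -(f' s * Real.sinh (k * δ)) ≤ k * f s * Real.cosh (k * δ) := by
    simpa using deriv_mul_sinh_le_mul_cosh hS hf hf' hk.le hf'' hright (hpos _ hright).le hs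
  have habs : |f' s| * Real.sinh (k * δ) ≤ k * f s * Real.cosh (k * δ) := by
    simpa only [abs_mul, abs_of_pos hsinh] using abs_le'.2 ⟨hupper, hlower⟩
  rw [abs_div, abs_of_pos (hpos s hs), div_le_div_iff₀ (hpos s hs) hsinh]
  linarith

end SturmComparison

namespace WarpedBergerMetric

variable (g : WarpedBergerMetric) {s A : ℝ}

lemma hasDerivAt_b (hs : 0 < s) : HasDerivAt g.b (deriv g.b s) s :=
  ((g.smooth_b.contDiffAt (Ioi_mem_nhds hs)).differentiableAt (by simp)).hasDerivAt

lemma hasDerivAt_deriv_b (hs : 0 < s) : HasDerivAt (deriv g.b) (deriv (deriv g.b) s) s := by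
  have hsmooth : ContDiffOn ℝ (⊤ : ℕ∞) (deriv g.b) (Ioi 0) :=
    g.smooth_b.deriv_of_isOpen isOpen_Ioi le_rfl
  exact ((hsmooth.contDiffAt (Ioi_mem_nhds hs)).differentiableAt (by simp)).hasDerivAt

lemma abs_k01_le_RmNorm (s : ℝ) : |g.k01 s| ≤ g.RmNorm s := by
  unfold RmNorm
  linarith [abs_nonneg (g.k12 s), abs_nonneg (g.k13 s), abs_nonneg (g.k03 s)]

lemma deriv_deriv_b_le_mul_b (hs : 0 < s) (hA : g.RmNorm s ≤ A) :
    deriv (deriv g.b) s ≤ A * g.b s := by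
  have hk01 : -g.k01 s ≤ A := (neg_le_abs _).trans ((g.abs_k01_le_RmNorm s).trans hA)
  rwa [k01, neg_div, neg_neg, div_le_iff₀ (g.b_pos s hs)] at hk01

end WarpedBergerMetric

theorem warpedBerger_bs_over_b_bounded_general {b b' b'' : ℝ → ℝ} {A : ℝ}
    (hb : ∀ s > 0, HasDerivAt b (b' s) s) (hb' : ∀ s > 0, HasDerivAt b' (b'' s) s)
    (hpos : ∀ s > 0, 0 < b s) (hb'' : ∀ s > 0, b'' s ≤ A * b s) :
    ∀ s₀ > 0, ∃ α > 0, ∀ s ≥ s₀, |b' s / b s| ≤ α := by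
  intro s₀ hs₀
  obtain ⟨k, hk, hAk⟩ : ∃ k > 0, A ≤ k ^ 2 :=
    ⟨|A| + 1, by positivity, by nlinarith [le_abs_self A, abs_nonneg A]⟩
  have hsinh : 0 < Real.sinh (k * (s₀ / 2)) := Real.sinh_pos_iff.2 (by positivity)
  refine ⟨k * Real.cosh (k * (s₀ / 2)) / Real.sinh (k * (s₀ / 2)),
    div_pos (mul_pos hk (Real.cosh_pos _)) hsinh, fun s hs ↦ ?_⟩
  refine abs_deriv_div_le_mul_cosh_div_sinh (convex_Ioi 0)
    (fun x hx ↦ (hb x hx).hasDerivWithinAt) (fun x hx ↦ (hb' x hx).hasDerivWithinAt) hpos hk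
    (fun x hx ↦ (hb'' x hx).trans ?_) (half_pos hs₀) ?_ ?_
  · exact mul_le_mul_of_nonneg_right hAk (hpos x hx).le
  · exact mem_Ioi.2 (by linarith)
  · exact mem_Ioi.2 (by linarith)

/-- for any `s₀ > 0` there exists `α > 0` with `|b_s/b|(s) ≤ α` for all
`s ≥ s₀`. -/
theorem warpedBerger_bs_over_b_bounded (g : WarpedBergerMetric) (hBC : g.BoundedCurvature) :
    ∀ s₀ > 0, ∃ α > 0, ∀ s ≥ s₀, |deriv g.b s / g.b s| ≤ α := by
  obtain ⟨A, -, hA⟩ := hBC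
  exact warpedBerger_bs_over_b_bounded_general (fun _ ↦ g.hasDerivAt_b)
    (fun _ ↦ g.hasDerivAt_deriv_b) g.b_pos fun s hs ↦ g.deriv_deriv_b_le_mul_b hs (hA s hs)
end
end

section
/- Let (ℝ⁴, g(t)) for t ∈ [0,T), T < ∞, be a warped Berger Ricci flow with bounded curvature starting at a complete bounded-curvature warped Berger metric g₀ with b_s ≥ 0 and H ≥ 0 at t = 0 and with b(x,0) → ∞ and b²c(x,0) → ∞ as x → ∞, and suppose there exists ρ > 0 such that |Rm|(x,t) ≤ 1 and, for each t₀ < T, the first derivatives of the curvature are uniformly bounded, for all x ≥ ρ and all t ∈ [0,T). Then there exist x̃₂ ≥ x̃₁ > ρ, δ > 0 and t̃ ∈ [0,T) such that b_s(x̃₁,t) ≥ δ and H(x̃₂,t) ≥ δ for every t ∈ [t̃,T). -/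
/-!
Outside radius `ρ` the flow equations say that `∂ₜ log b`, `∂ₜ log c` and `∂ₜ log ξ` are linear
combinations of sectional curvatures, hence bounded, and that `∂ₛ ∂ₜ log b`, `∂ₛ ∂ₜ log c` are
bounded as well. Let `φ = α log b + β log c`, so that `φ_s = α b_s / b + β c_s / c`: this is
`b_s / b` for `(α, β) = (1, 0)` and `H` for `(α, β) = (2, 1)`. Since `φ(·, 0)` is unbounded above,
there are radii `p < q` with `φ(q, 0) - φ(p, 0)` so large that, the time interval being finite,
`φ(q, t) - φ(p, t)` stays bounded below by a positive constant. At every time the mean value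
theorem gives a radius in `(p, q)` where `φ_x` is bounded below. That radius depends on the time,
but `φ_x` is Lipschitz in time uniformly on `(p, q)`, so the radius found at a time close enough
to `T` serves for all later times.
-/

open Set Filter Topology MeasureTheory

noncomputable section

/-- Spatial derivative with respect to arclength: `f_s = ξ⁻¹ ∂ₓ f`. -/
def dS (ξ f : ℝ → ℝ → ℝ) (x t : ℝ) : ℝ := (ξ x t)⁻¹ * deriv (fun y => f y t) x

/-- A warped Berger Ricci flow on `ℝ⁴` over `[0,T)`, described by smooth positive radial
functions `ξ, b, c` of the radial coordinate `x ∈ (0,∞)` and time `t ∈ [0,T)`,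
satisfying the Ricci flow equations, completeness, the smoothness boundary conditions
at the origin of `ℝ⁴`, and the Berger ordering `c ≤ b` at `t = 0`. -/
structure WarpedBergerFlow where
  T : ℝ
  T_pos : 0 < T
  ξ : ℝ → ℝ → ℝ
  b : ℝ → ℝ → ℝ
  c : ℝ → ℝ → ℝ
  smooth_ξ : ContDiffOn ℝ (⊤ : ℕ∞) (fun p : ℝ × ℝ => ξ p.1 p.2) (Ioi 0 ×ˢ Ico 0 T)
  smooth_b : ContDiffOn ℝ (⊤ : ℕ∞) (fun p : ℝ × ℝ => b p.1 p.2) (Ioi 0 ×ˢ Ico 0 T)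
  smooth_c : ContDiffOn ℝ (⊤ : ℕ∞) (fun p : ℝ × ℝ => c p.1 p.2) (Ioi 0 ×ˢ Ico 0 T)
  ξ_pos : ∀ x > 0, ∀ t ∈ Ico (0:ℝ) T, 0 < ξ x t
  b_pos : ∀ x > 0, ∀ t ∈ Ico (0:ℝ) T, 0 < b x t
  c_pos : ∀ x > 0, ∀ t ∈ Ico (0:ℝ) T, 0 < c x t
  /-- Ricci flow equation for `b`:
  `b_t = b_ss + (c_s/c + b_s/b) b_s + 2(c² − 2b²)/b³`. -/
  eq_b : ∀ x > 0, ∀ t ∈ Ico (0:ℝ) T,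
    deriv (fun u => b x u) t =
      dS ξ (dS ξ b) x t + (dS ξ c x t / c x t + dS ξ b x t / b x t) * dS ξ b x t
        + 2 * ((c x t) ^ 2 - 2 * (b x t) ^ 2) / (b x t) ^ 3
  /-- Ricci flow equation for `c`: `c_t = c_ss + 2 (b_s/b) c_s − 2c³/b⁴`. -/
  eq_c : ∀ x > 0, ∀ t ∈ Ico (0:ℝ) T,
    deriv (fun u => c x u) t =
      dS ξ (dS ξ c) x t + 2 * (dS ξ b x t / b x t) * dS ξ c x t
        - 2 * (c x t) ^ 3 / (b x t) ^ 4
  /-- Ricci flow equation for `ξ`: `ξ_t = −ξ (2 b_ss/b + c_ss/c)`. -/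
  eq_ξ : ∀ x > 0, ∀ t ∈ Ico (0:ℝ) T,
    deriv (fun u => ξ x u) t =
      -(ξ x t) * (2 * dS ξ (dS ξ b) x t / b x t + dS ξ (dS ξ c) x t / c x t)
  /-- Completeness: the arclength `s(x,t) = ∫₀ˣ ξ(y,t) dy` tends to `∞` as `x → ∞`. -/
  complete : ∀ t ∈ Ico (0:ℝ) T,
    Tendsto (fun x => ∫ y in (0:ℝ)..x, ξ y t) atTop atTop
  /-- Smoothness at the origin: `b → 0` as `x → 0⁺`. -/
  b_origin : ∀ t ∈ Ico (0:ℝ) T, Tendsto (fun x => b x t) (𝓝[>] 0) (𝓝 0)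
  c_origin : ∀ t ∈ Ico (0:ℝ) T, Tendsto (fun x => c x t) (𝓝[>] 0) (𝓝 0)
  /-- Smoothness at the origin: `b_s → 1` as `x → 0⁺`. -/
  bs_origin : ∀ t ∈ Ico (0:ℝ) T, Tendsto (fun x => dS ξ b x t) (𝓝[>] 0) (𝓝 1)
  cs_origin : ∀ t ∈ Ico (0:ℝ) T, Tendsto (fun x => dS ξ c x t) (𝓝[>] 0) (𝓝 1)
  /-- The Berger ordering `c ≤ b` holds at `t = 0`. -/
  ordered_init : ∀ x > 0, c x 0 ≤ b x 0

namespace WarpedBergerFlow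

variable (F : WarpedBergerFlow)

/-- `b_s`. -/
def bS : ℝ → ℝ → ℝ := dS F.ξ F.b
/-- `c_s`. -/
def cS : ℝ → ℝ → ℝ := dS F.ξ F.c
/-- `b_ss`. -/
def bSS : ℝ → ℝ → ℝ := dS F.ξ (dS F.ξ F.b)
/-- `c_ss`. -/
def cSS : ℝ → ℝ → ℝ := dS F.ξ (dS F.ξ F.c)

/-- Sectional curvature `k12 = (4b² − 3c²)/b⁴ − b_s²/b²`. -/
def k12 (x t : ℝ) : ℝ :=
  (4 * (F.b x t) ^ 2 - 3 * (F.c x t) ^ 2) / (F.b x t) ^ 4 - (F.bS x t) ^ 2 / (F.b x t) ^ 2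
/-- Sectional curvature `k13 = c²/b⁴ − b_s c_s/(b c)`. -/
def k13 (x t : ℝ) : ℝ :=
  (F.c x t) ^ 2 / (F.b x t) ^ 4 - F.bS x t * F.cS x t / (F.b x t * F.c x t)
/-- Sectional curvature `k01 = −b_ss/b`. -/
def k01 (x t : ℝ) : ℝ := -(F.bSS x t) / F.b x t
/-- Sectional curvature `k03 = −c_ss/c`. -/
def k03 (x t : ℝ) : ℝ := -(F.cSS x t) / F.c x t
/-- `|Rm| = |k12| + |k13| + |k01| + |k03|`. -/
def RmNorm (x t : ℝ) : ℝ := |F.k12 x t| + |F.k13 x t| + |F.k01 x t| + |F.k03 x t|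
/-- Mean curvature of the Euclidean hypersphere of radius `x`: `H = 2 b_s/b + c_s/c`. -/
def meanH (x t : ℝ) : ℝ := 2 * F.bS x t / F.b x t + F.cS x t / F.c x t

/-- Bounded curvature: `|Rm|` is bounded on `(0,∞) × [0,t₀]` for every `t₀ < T`. -/
def BoundedCurvature : Prop :=
  ∀ t₀ ∈ Ico (0:ℝ) F.T, ∃ C : ℝ, ∀ x > 0, ∀ t ∈ Icc (0:ℝ) t₀, F.RmNorm x t ≤ C

/-- The initial metric belongs to the class `𝒢`: at `t = 0`, `b_s ≥ 0` and `H ≥ 0`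
everywhere, `b(·,0)` is bounded, and `|Rm|(·,0)` is bounded. -/
def InG : Prop :=
  (∀ x > 0, 0 ≤ F.bS x 0) ∧ (∀ x > 0, 0 ≤ F.meanH x 0) ∧
  (∃ M : ℝ, ∀ x > 0, F.b x 0 ≤ M) ∧ (∃ C : ℝ, ∀ x > 0, F.RmNorm x 0 ≤ C)

end WarpedBergerFlow

open scoped ContDiff

/-! ### Real functions -/

theorem contDiffOn_slice_left {n : WithTop ℕ∞} {f : ℝ → ℝ → ℝ} {S I : Set ℝ} {t : ℝ}
    (hf : ContDiffOn ℝ n (fun p : ℝ × ℝ => f p.1 p.2) (S ×ˢ I)) (ht : t ∈ I) :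
    ContDiffOn ℝ n (fun x => f x t) S :=
  hf.comp (contDiff_prodMk_left t).contDiffOn fun _ hx => ⟨hx, ht⟩

theorem contDiffOn_slice_right {n : WithTop ℕ∞} {f : ℝ → ℝ → ℝ} {S I : Set ℝ} {x : ℝ}
    (hf : ContDiffOn ℝ n (fun p : ℝ × ℝ => f p.1 p.2) (S ×ˢ I)) (hx : x ∈ S) :
    ContDiffOn ℝ n (f x) I :=
  hf.comp (contDiff_prodMk_right x).contDiffOn fun _ ht => ⟨hx, ht⟩

theorem differentiableAt_of_contDiffOn_infty {f : ℝ → ℝ} {S : Set ℝ} {x : ℝ}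
    (hf : ContDiffOn ℝ ∞ f S) (hS : S ∈ 𝓝 x) : DifferentiableAt ℝ f x :=
  (hf.contDiffAt hS).differentiableAt (by simp)

theorem abs_image_sub_le_of_abs_hasDerivAt_le_interior {D : Set ℝ} (hD : Convex ℝ D)
    {f f' : ℝ → ℝ} {K : ℝ} (hf : ContinuousOn f D)
    (hf' : ∀ t ∈ interior D, HasDerivAt f (f' t) t) (hK : ∀ t ∈ interior D, |f' t| ≤ K)
    {s t : ℝ} (hs : s ∈ D) (ht : t ∈ D) : |f t - f s| ≤ K * |t - s| := by
  wlog hst : s ≤ t generalizing s t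
  · rw [abs_sub_comm, abs_sub_comm t]
    exact this ht hs (le_of_not_ge hst)
  have hdiff : DifferentiableOn ℝ f (interior D) := fun u hu =>
    (hf' u hu).differentiableAt.differentiableWithinAt
  have hderiv : ∀ u ∈ interior D, -K ≤ deriv f u ∧ deriv f u ≤ K := fun u hu =>
    abs_le.1 ((hf' u hu).deriv ▸ hK u hu)
  have hupper := hD.image_sub_le_mul_sub_of_deriv_le hf hdiff (fun u hu => (hderiv u hu).2)
    s hs t ht hst
  have hlower := hD.mul_sub_le_image_sub_of_le_deriv hf hdiff (fun u hu => (hderiv u hu).1)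
    s hs t ht hst
  rw [abs_of_nonneg (sub_nonneg.2 hst), abs_le]
  exact ⟨by linarith, hupper⟩

theorem abs_image_sub_zero_le_of_abs_hasDerivAt_le {f f' : ℝ → ℝ} {T K : ℝ}
    (hf : ContinuousOn f (Ico 0 T)) (hf' : ∀ t ∈ Ioo 0 T, HasDerivAt f (f' t) t)
    (hK : ∀ t ∈ Ioo 0 T, |f' t| ≤ K) {t : ℝ} (ht : t ∈ Ico 0 T) : |f t - f 0| ≤ K * T := by
  have hT : 0 < T := ht.1.trans_lt ht.2
  have hK0 : 0 ≤ K := (abs_nonneg _).trans (hK (T / 2) ⟨half_pos hT, half_lt_self hT⟩)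
  rw [← interior_Ico] at hf' hK
  calc |f t - f 0| ≤ K * |t - 0| := abs_image_sub_le_of_abs_hasDerivAt_le_interior
        (convex_Ico 0 T) hf hf' hK ⟨le_rfl, hT⟩ ht
    _ ≤ K * T := by
        rw [sub_zero, abs_of_nonneg ht.1]
        exact mul_le_mul_of_nonneg_left ht.2.le hK0

/-- Passing to difference quotients in `x` replaces a symmetry argument for mixed derivatives:
`y ↦ φ y t - φ y s` is Lipschitz near `x` because its time derivative is. -/
theorem abs_deriv_sub_deriv_le_of_timeDeriv_lipschitz {φ G : ℝ → ℝ → ℝ} {D U : Set ℝ} {x L : ℝ}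
    (hD : Convex ℝ D) (hU : U ∈ 𝓝 x) (hL : 0 ≤ L)
    (hcont : ∀ y ∈ U, ContinuousOn (φ y) D)
    (hderiv : ∀ y ∈ U, ∀ u ∈ interior D, HasDerivAt (φ y) (G y u) u)
    (hlip : ∀ y ∈ U, ∀ u ∈ interior D, |G y u - G x u| ≤ L * |y - x|)
    (hdiff : ∀ u ∈ D, DifferentiableAt ℝ (fun y => φ y u) x)
    {s t : ℝ} (hs : s ∈ D) (ht : t ∈ D) :
    |deriv (fun y => φ y t) x - deriv (fun y => φ y s) x| ≤ L * |t - s| := by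
  refine ((hdiff t ht).hasDerivAt.sub (hdiff s hs).hasDerivAt).le_of_lip' (by positivity) ?_
  filter_upwards [hU] with y hy
  have hx := mem_of_mem_nhds hU
  have hquot := abs_image_sub_le_of_abs_hasDerivAt_le_interior hD
    ((hcont y hy).sub (hcont x hx))
    (fun u hu => (hderiv y hy u hu).sub (hderiv x hx u hu)) (hlip y hy) hs ht
  calc ‖(φ y t - φ y s) - (φ x t - φ x s)‖
      = |(φ y t - φ x t) - (φ y s - φ x s)| := by rw [Real.norm_eq_abs]; congr 1; ring
    _ ≤ L * |y - x| * |t - s| := hquot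
    _ = L * |t - s| * ‖y - x‖ := by rw [Real.norm_eq_abs]; ring

theorem exists_forall_deriv_ge_of_image_sub_ge {φ : ℝ → ℝ → ℝ} {p q a T η L : ℝ}
    (hpq : p < q) (haT : a < T) (hη : 0 < η)
    (hcont : ∀ t ∈ Ico a T, ContinuousOn (fun x => φ x t) (Icc p q))
    (hdiff : ∀ t ∈ Ico a T, DifferentiableOn ℝ (fun x => φ x t) (Ioo p q))
    (hgap : ∀ t ∈ Ico a T, η ≤ φ q t - φ p t)
    (hlip : ∀ x ∈ Ioo p q, ∀ s ∈ Ico a T, ∀ t ∈ Ico a T,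
      |deriv (fun y => φ y t) x - deriv (fun y => φ y s) x| ≤ L * |t - s|) :
    ∃ x ∈ Ioo p q, ∃ s ∈ Ico a T, ∀ t ∈ Ico s T,
      η / (2 * (q - p)) ≤ deriv (fun y => φ y t) x := by
  have hpq' : 0 < q - p := sub_pos.2 hpq
  obtain ⟨s, hs_small, hs⟩ :
      ∃ s, |L| * (T - s) < η / (2 * (q - p)) ∧ s ∈ Ico a T := by
    have hlim : Tendsto (fun s => |L| * (T - s)) (𝓝[<] T) (𝓝 0) := by
      have hcont : Continuous fun s => |L| * (T - s) := by fun_prop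
      simpa using (hcont.tendsto T).mono_left nhdsWithin_le_nhds
    exact ((hlim.eventually_lt_const (by positivity)).and (Ico_mem_nhdsLT haT)).exists
  obtain ⟨x, hx, hslope⟩ := exists_deriv_eq_slope _ hpq (hcont s hs) (hdiff s hs)
  refine ⟨x, hx, s, hs, fun t ht => ?_⟩
  have hat_s : η / (q - p) ≤ deriv (fun y => φ y s) x := by
    rw [hslope]
    gcongr
    exact hgap s hs
  have hvariation : |deriv (fun y => φ y t) x - deriv (fun y => φ y s) x|
      ≤ η / (2 * (q - p)) :=
    calc _ ≤ L * |t - s| := hlip x hx s hs t ⟨hs.1.trans ht.1, ht.2⟩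
      _ = L * (t - s) := by rw [abs_of_nonneg (sub_nonneg.2 ht.1)]
      _ ≤ |L| * (T - s) := mul_le_mul (le_abs_self L) (by linarith [ht.2])
        (sub_nonneg.2 ht.1) (abs_nonneg L)
      _ ≤ _ := hs_small.le
  have hhalf : η / (q - p) = 2 * (η / (2 * (q - p))) := by field_simp
  linarith [(abs_le.1 hvariation).1]

theorem le_mul_exp_of_abs_log_sub_log_le {x y K : ℝ} (hx : 0 < x) (hy : 0 < y)
    (h : |Real.log x - Real.log y| ≤ K) : x ≤ y * Real.exp K := by
  rw [← Real.log_le_log_iff hx (by positivity), Real.log_mul hy.ne' (Real.exp_ne_zero K),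
    Real.log_exp]
  linarith [(abs_le.1 h).2]

/-! ### Arclength derivatives -/

theorem contDiffOn_dS {n : WithTop ℕ∞} {ξ f : ℝ → ℝ → ℝ} {S : Set ℝ} {t : ℝ} (hS : IsOpen S)
    (hξ : ContDiffOn ℝ n (fun x => ξ x t) S) (hξ0 : ∀ x ∈ S, ξ x t ≠ 0)
    (hf : ContDiffOn ℝ (n + 1) (fun x => f x t) S) :
    ContDiffOn ℝ n (fun x => dS ξ f x t) S :=
  (hξ.inv hξ0).mul (hf.deriv_of_isOpen hS le_rfl)

theorem deriv_eq_mul_dS {ξ f : ℝ → ℝ → ℝ} {x t : ℝ} (hξ : ξ x t ≠ 0) :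
    deriv (fun y => f y t) x = ξ x t * dS ξ f x t :=
  (mul_inv_cancel_left₀ hξ _).symm

namespace WarpedBergerFlow

/-- The linear combination of sectional curvatures by which `log (b ^ α * c ^ β)` evolves: `-α` and
`-β` times the Ricci curvatures in the directions of `b` and of `c`. The curvatures are
arguments so that the same expression can be formed from their arclength derivatives. -/
def curvatureCombination (α β k₁₂ k₁₃ k₀₁ k₀₃ : ℝ) : ℝ :=
  -(α * (k₁₂ + k₁₃ + k₀₁) + β * (k₀₃ + 2 * k₁₃))

theorem abs_curvatureCombination_le (α β k₁₂ k₁₃ k₀₁ k₀₃ : ℝ) :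
    |curvatureCombination α β k₁₂ k₁₃ k₀₁ k₀₃|
      ≤ (|α| + 2 * |β|) * (|k₁₂| + |k₁₃| + |k₀₁| + |k₀₃|) := by
  have hα : |k₁₂ + k₁₃ + k₀₁| ≤ |k₁₂| + |k₁₃| + |k₀₁| + |k₀₃| := by
    linarith [abs_add_three k₁₂ k₁₃ k₀₁, abs_nonneg k₀₃]
  have hβ : |k₀₃ + 2 * k₁₃| ≤ 2 * (|k₁₂| + |k₁₃| + |k₀₁| + |k₀₃|) := by
    have h := abs_add_le k₀₃ (2 * k₁₃)
    rw [abs_mul, abs_two] at h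
    linarith [abs_nonneg k₁₂, abs_nonneg k₀₁, abs_nonneg k₀₃]
  calc |curvatureCombination α β k₁₂ k₁₃ k₀₁ k₀₃|
      ≤ |α| * |k₁₂ + k₁₃ + k₀₁| + |β| * |k₀₃ + 2 * k₁₃| := by
        rw [curvatureCombination, abs_neg, ← abs_mul, ← abs_mul]
        exact abs_add_le _ _
    _ ≤ |α| * (|k₁₂| + |k₁₃| + |k₀₁| + |k₀₃|)
        + |β| * (2 * (|k₁₂| + |k₁₃| + |k₀₁| + |k₀₃|)) := by gcongr
    _ = _ := by ring

variable (F : WarpedBergerFlow)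

/-- The sum of the absolute values of the arclength derivatives of the sectional curvatures,
playing the role of `|∇ Rm|`. -/
def DRmNorm (x t : ℝ) : ℝ :=
  |dS F.ξ F.k12 x t| + |dS F.ξ F.k13 x t| + |dS F.ξ F.k01 x t| + |dS F.ξ F.k03 x t|

/-- `log (b ^ α * c ^ β)` for real exponents, whose arclength derivative is `b_s / b` for
`(α, β) = (1, 0)` and the mean curvature for `(α, β) = (2, 1)`. -/
def logMonomial (α β x t : ℝ) : ℝ := α * Real.log (F.b x t) + β * Real.log (F.c x t)

/-- The time derivative of `logMonomial`, expressed through the sectional curvatures. -/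
def logMonomialRate (α β x t : ℝ) : ℝ :=
  curvatureCombination α β (F.k12 x t) (F.k13 x t) (F.k01 x t) (F.k03 x t)

variable {F} {α β x t K : ℝ}

/-! ### Regularity in the radial variable -/

theorem contDiffOn_dS_radial {f : ℝ → ℝ → ℝ} (ht : t ∈ Ico 0 F.T)
    (hf : ContDiffOn ℝ ∞ (fun x => f x t) (Ioi 0)) :
    ContDiffOn ℝ ∞ (fun x => dS F.ξ f x t) (Ioi 0) :=
  contDiffOn_dS isOpen_Ioi (contDiffOn_slice_left F.smooth_ξ ht)
    (fun x hx => (F.ξ_pos x hx t ht).ne') hf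

theorem contDiffOn_bS (ht : t ∈ Ico 0 F.T) :
    ContDiffOn ℝ ∞ (fun x => F.bS x t) (Ioi 0) :=
  contDiffOn_dS_radial ht (contDiffOn_slice_left F.smooth_b ht)

theorem contDiffOn_cS (ht : t ∈ Ico 0 F.T) :
    ContDiffOn ℝ ∞ (fun x => F.cS x t) (Ioi 0) :=
  contDiffOn_dS_radial ht (contDiffOn_slice_left F.smooth_c ht)

theorem differentiableAt_b (hx : 0 < x) (ht : t ∈ Ico 0 F.T) :
    DifferentiableAt ℝ (fun y => F.b y t) x :=
  differentiableAt_of_contDiffOn_infty (contDiffOn_slice_left F.smooth_b ht) (Ioi_mem_nhds hx)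

theorem differentiableAt_c (hx : 0 < x) (ht : t ∈ Ico 0 F.T) :
    DifferentiableAt ℝ (fun y => F.c y t) x :=
  differentiableAt_of_contDiffOn_infty (contDiffOn_slice_left F.smooth_c ht) (Ioi_mem_nhds hx)

theorem differentiableAt_k12 (hx : 0 < x) (ht : t ∈ Ico 0 F.T) :
    DifferentiableAt ℝ (fun y => F.k12 y t) x := by
  have hb := differentiableAt_b hx ht
  have hc := differentiableAt_c hx ht
  have hbS := differentiableAt_of_contDiffOn_infty (contDiffOn_bS ht) (Ioi_mem_nhds hx)
  have hb0 := (F.b_pos x hx t ht).ne'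
  unfold k12
  fun_prop (disch := positivity)

theorem differentiableAt_k13 (hx : 0 < x) (ht : t ∈ Ico 0 F.T) :
    DifferentiableAt ℝ (fun y => F.k13 y t) x := by
  have hb := differentiableAt_b hx ht
  have hc := differentiableAt_c hx ht
  have hbS := differentiableAt_of_contDiffOn_infty (contDiffOn_bS ht) (Ioi_mem_nhds hx)
  have hcS := differentiableAt_of_contDiffOn_infty (contDiffOn_cS ht) (Ioi_mem_nhds hx)
  have hb0 := (F.b_pos x hx t ht).ne'
  have hc0 := (F.c_pos x hx t ht).ne'
  unfold k13
  fun_prop (disch := positivity)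

theorem differentiableAt_k01 (hx : 0 < x) (ht : t ∈ Ico 0 F.T) :
    DifferentiableAt ℝ (fun y => F.k01 y t) x := by
  have hbSS : DifferentiableAt ℝ (fun y => F.bSS y t) x :=
    differentiableAt_of_contDiffOn_infty (contDiffOn_dS_radial ht (contDiffOn_bS ht))
      (Ioi_mem_nhds hx)
  exact hbSS.neg.div (differentiableAt_b hx ht) (F.b_pos x hx t ht).ne'

theorem differentiableAt_k03 (hx : 0 < x) (ht : t ∈ Ico 0 F.T) :
    DifferentiableAt ℝ (fun y => F.k03 y t) x := by
  have hcSS : DifferentiableAt ℝ (fun y => F.cSS y t) x :=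
    differentiableAt_of_contDiffOn_infty (contDiffOn_dS_radial ht (contDiffOn_cS ht))
      (Ioi_mem_nhds hx)
  exact hcSS.neg.div (differentiableAt_c hx ht) (F.c_pos x hx t ht).ne'

theorem hasDerivAt_logMonomial_radial (hx : 0 < x) (ht : t ∈ Ico 0 F.T) :
    HasDerivAt (fun y => F.logMonomial α β y t)
      (α * (deriv (fun y => F.b y t) x / F.b x t) + β * (deriv (fun y => F.c y t) x / F.c x t)) x :=
  (((differentiableAt_b hx ht).hasDerivAt.log (F.b_pos x hx t ht).ne').const_mul α).add
    (((differentiableAt_c hx ht).hasDerivAt.log (F.c_pos x hx t ht).ne').const_mul β)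

theorem dS_logMonomial (hx : 0 < x) (ht : t ∈ Ico 0 F.T) :
    dS F.ξ (F.logMonomial α β) x t
      = α * (F.bS x t / F.b x t) + β * (F.cS x t / F.c x t) := by
  rw [dS, (hasDerivAt_logMonomial_radial hx ht).deriv, bS, cS, dS, dS]
  ring

theorem hasDerivAt_logMonomialRate_radial (hx : 0 < x) (ht : t ∈ Ico 0 F.T) :
    HasDerivAt (fun y => F.logMonomialRate α β y t)
      (F.ξ x t * curvatureCombination α β
        (dS F.ξ F.k12 x t) (dS F.ξ F.k13 x t) (dS F.ξ F.k01 x t) (dS F.ξ F.k03 x t)) x := by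
  have hξ := (F.ξ_pos x hx t ht).ne'
  have h₁₂ := (differentiableAt_k12 hx ht).hasDerivAt
  have h₁₃ := (differentiableAt_k13 hx ht).hasDerivAt
  have h₀₁ := (differentiableAt_k01 hx ht).hasDerivAt
  have h₀₃ := (differentiableAt_k03 hx ht).hasDerivAt
  rw [deriv_eq_mul_dS hξ] at h₁₂ h₁₃ h₀₁ h₀₃
  refine ((((h₁₂.add h₁₃).add h₀₁).const_mul α).add
    ((h₀₃.add (h₁₃.const_mul 2)).const_mul β)).neg.congr_deriv ?_
  rw [curvatureCombination]
  ring

theorem abs_logMonomialRate_sub_le {p q M C : ℝ} (hp : 0 < p)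
    (ht : t ∈ Ico 0 F.T) (hM : ∀ x ∈ Icc p q, F.ξ x t ≤ M)
    (hD : ∀ x ∈ Icc p q, F.DRmNorm x t ≤ C)
    {x y : ℝ} (hx : x ∈ Icc p q) (hy : y ∈ Icc p q) :
    |F.logMonomialRate α β y t - F.logMonomialRate α β x t|
      ≤ M * ((|α| + 2 * |β|) * C) * |y - x| := by
  refine (convex_Icc p q).norm_image_sub_le_of_norm_hasDerivWithin_le (fun z hz =>
    (hasDerivAt_logMonomialRate_radial (hp.trans_le hz.1) ht).hasDerivWithinAt)
    (fun z hz => ?_) hx hy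
  have hξ := F.ξ_pos z (hp.trans_le hz.1) t ht
  rw [Real.norm_eq_abs, abs_mul, abs_of_pos hξ]
  refine mul_le_mul (hM z hz) ?_ (abs_nonneg _) (hξ.le.trans (hM z hz))
  exact (abs_curvatureCombination_le ..).trans (by gcongr; exact hD z hz)

/-! ### Evolution in time -/

theorem hasDerivAt_log_b_time (hx : 0 < x) (ht : t ∈ Ioo 0 F.T) :
    HasDerivAt (fun u => Real.log (F.b x u)) (-(F.k12 x t + F.k13 x t + F.k01 x t)) t := by
  have ht' := Ioo_subset_Ico_self ht
  have hb := F.b_pos x hx t ht'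
  have hc := F.c_pos x hx t ht'
  convert (differentiableAt_of_contDiffOn_infty (contDiffOn_slice_right F.smooth_b hx)
    (Ico_mem_nhds ht.1 ht.2)).hasDerivAt.log hb.ne' using 1
  rw [F.eq_b x hx t ht', k12, k13, k01, bS, cS, bSS]
  field_simp
  ring

theorem hasDerivAt_log_c_time (hx : 0 < x) (ht : t ∈ Ioo 0 F.T) :
    HasDerivAt (fun u => Real.log (F.c x u)) (-(F.k03 x t + 2 * F.k13 x t)) t := by
  have ht' := Ioo_subset_Ico_self ht
  have hb := F.b_pos x hx t ht'
  have hc := F.c_pos x hx t ht'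
  convert (differentiableAt_of_contDiffOn_infty (contDiffOn_slice_right F.smooth_c hx)
    (Ico_mem_nhds ht.1 ht.2)).hasDerivAt.log hc.ne' using 1
  rw [F.eq_c x hx t ht', k03, k13, bS, cS, cSS]
  field_simp
  ring

theorem hasDerivAt_log_ξ_time (hx : 0 < x) (ht : t ∈ Ioo 0 F.T) :
    HasDerivAt (fun u => Real.log (F.ξ x u)) (2 * F.k01 x t + F.k03 x t) t := by
  have ht' := Ioo_subset_Ico_self ht
  have hξ := F.ξ_pos x hx t ht'
  convert (differentiableAt_of_contDiffOn_infty (contDiffOn_slice_right F.smooth_ξ hx)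
    (Ico_mem_nhds ht.1 ht.2)).hasDerivAt.log hξ.ne' using 1
  rw [F.eq_ξ x hx t ht', k01, k03, bSS, cSS]
  field_simp
  ring

theorem hasDerivAt_logMonomial_time (hx : 0 < x) (ht : t ∈ Ioo 0 F.T) :
    HasDerivAt (F.logMonomial α β x) (F.logMonomialRate α β x t) t := by
  refine (((hasDerivAt_log_b_time hx ht).const_mul α).add
    ((hasDerivAt_log_c_time hx ht).const_mul β)).congr_deriv ?_
  rw [logMonomialRate, curvatureCombination]
  ring

theorem continuousOn_logMonomial_time (hx : 0 < x) :
    ContinuousOn (F.logMonomial α β x) (Ico 0 F.T) := by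
  have hb := (contDiffOn_slice_right F.smooth_b hx).continuousOn.log fun t ht =>
    (F.b_pos x hx t ht).ne'
  have hc := (contDiffOn_slice_right F.smooth_c hx).continuousOn.log fun t ht =>
    (F.c_pos x hx t ht).ne'
  exact (hb.const_smul α).add (hc.const_smul β)

theorem abs_logMonomial_sub_initial_le (hx : 0 < x) (hRm : ∀ t ∈ Ico 0 F.T, F.RmNorm x t ≤ K)
    (ht : t ∈ Ico 0 F.T) :
    |F.logMonomial α β x t - F.logMonomial α β x 0| ≤ (|α| + 2 * |β|) * K * F.T := by
  refine abs_image_sub_zero_le_of_abs_hasDerivAt_le (continuousOn_logMonomial_time hx)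
    (fun u hu => hasDerivAt_logMonomial_time hx hu) (fun u hu => ?_) ht
  exact (abs_curvatureCombination_le ..).trans
    (by gcongr; exact hRm u (Ioo_subset_Ico_self hu))

theorem b_initial_le_b_mul_exp (hx : 0 < x) (hRm : ∀ t ∈ Ico 0 F.T, F.RmNorm x t ≤ K)
    (ht : t ∈ Ico 0 F.T) : F.b x 0 ≤ F.b x t * Real.exp (K * F.T) := by
  refine le_mul_exp_of_abs_log_sub_log_le (F.b_pos x hx 0 ⟨le_rfl, F.T_pos⟩)
    (F.b_pos x hx t ht) ?_
  rw [abs_sub_comm]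
  simpa [logMonomial] using abs_logMonomial_sub_initial_le (α := 1) (β := 0) hx hRm ht

theorem ξ_le_ξ_initial_mul_exp (hx : 0 < x) (hRm : ∀ t ∈ Ico 0 F.T, F.RmNorm x t ≤ K)
    (ht : t ∈ Ico 0 F.T) : F.ξ x t ≤ F.ξ x 0 * Real.exp (2 * K * F.T) := by
  refine le_mul_exp_of_abs_log_sub_log_le (F.ξ_pos x hx t ht)
    (F.ξ_pos x hx 0 ⟨le_rfl, F.T_pos⟩) ?_
  refine abs_image_sub_zero_le_of_abs_hasDerivAt_le (f := fun u => Real.log (F.ξ x u))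
    ((contDiffOn_slice_right F.smooth_ξ hx).continuousOn.log fun u hu => (F.ξ_pos x hx u hu).ne')
    (fun u hu => hasDerivAt_log_ξ_time hx hu) (fun u hu => ?_) ht
  have hsum := abs_add_le (2 * F.k01 x u) (F.k03 x u)
  have hcurv := hRm u (Ioo_subset_Ico_self hu)
  rw [RmNorm] at hcurv
  rw [abs_mul, abs_two] at hsum
  linarith [abs_nonneg (F.k12 x u), abs_nonneg (F.k13 x u), abs_nonneg (F.k03 x u)]

theorem exists_forall_ξ_le {p q : ℝ} (hp : 0 < p)
    (hRm : ∀ x ∈ Icc p q, ∀ t ∈ Ico 0 F.T, F.RmNorm x t ≤ K) :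
    ∃ M > 0, ∀ x ∈ Icc p q, ∀ t ∈ Ico 0 F.T, F.ξ x t ≤ M := by
  have hcont : ContinuousOn (fun x => F.ξ x 0) (Icc p q) :=
    (contDiffOn_slice_left F.smooth_ξ ⟨le_rfl, F.T_pos⟩).continuousOn.mono
      fun x hx => hp.trans_le hx.1
  obtain ⟨M₀, hM₀⟩ := isCompact_Icc.bddAbove_image hcont
  refine ⟨max M₀ 1 * Real.exp (2 * K * F.T), by positivity, fun x hx t ht => ?_⟩
  refine (ξ_le_ξ_initial_mul_exp (hp.trans_le hx.1) (hRm x hx) ht).trans ?_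
  gcongr
  exact (hM₀ (mem_image_of_mem _ hx)).trans (le_max_left _ _)

/-! ### Persistence of positive slopes -/

theorem abs_deriv_logMonomial_sub_le {p q M C : ℝ} (hp : 0 < p) (hM0 : 0 ≤ M) (hC0 : 0 ≤ C)
    (hM : ∀ x ∈ Icc p q, ∀ t ∈ Ico 0 F.T, F.ξ x t ≤ M)
    (hD : ∀ x ∈ Icc p q, ∀ t ∈ Ico 0 F.T, F.DRmNorm x t ≤ C)
    (hx : x ∈ Ioo p q) {s t : ℝ} (hs : s ∈ Ico 0 F.T) (ht : t ∈ Ico 0 F.T) :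
    |deriv (fun y => F.logMonomial α β y t) x - deriv (fun y => F.logMonomial α β y s) x|
      ≤ M * ((|α| + 2 * |β|) * C) * |t - s| := by
  have hpos : ∀ y ∈ Icc p q, 0 < y := fun y hy => hp.trans_le hy.1
  have hx' := Ioo_subset_Icc_self hx
  refine abs_deriv_sub_deriv_le_of_timeDeriv_lipschitz (G := F.logMonomialRate α β)
    (convex_Ico 0 F.T) (Icc_mem_nhds hx.1 hx.2) (by positivity)
    (fun y hy => continuousOn_logMonomial_time (hpos y hy)) (fun y hy u hu => ?_)
    (fun y hy u hu => ?_)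
    (fun u hu => (hasDerivAt_logMonomial_radial (hpos x hx') hu).differentiableAt) hs ht
  · exact hasDerivAt_logMonomial_time (hpos y hy) (by rwa [interior_Ico] at hu)
  · have hu' := interior_subset hu
    exact abs_logMonomialRate_sub_le hp hu' (fun z hz => hM z hz u hu')
      (fun z hz => hD z hz u hu') hx' hy

theorem exists_forall_dS_logMonomial_ge_of_initial_gap {p q C η : ℝ} (hp : 0 < p) (hpq : p < q)
    (hη : 0 < η) (hRm : ∀ x ∈ Icc p q, ∀ t ∈ Ico 0 F.T, F.RmNorm x t ≤ K)
    (hD : ∀ x ∈ Icc p q, ∀ t ∈ Ico 0 F.T, F.DRmNorm x t ≤ C)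
    (hgap : 2 * ((|α| + 2 * |β|) * K * F.T) + η ≤ F.logMonomial α β q 0 - F.logMonomial α β p 0) :
    ∃ x ∈ Ioo p q, ∃ δ > 0, ∃ s ∈ Ico 0 F.T, ∀ t ∈ Ico s F.T,
      δ ≤ dS F.ξ (F.logMonomial α β) x t := by
  have hpos : ∀ x ∈ Icc p q, 0 < x := fun x hx => hp.trans_le hx.1
  have hp_mem : p ∈ Icc p q := left_mem_Icc.2 hpq.le
  have hq_mem : q ∈ Icc p q := right_mem_Icc.2 hpq.le
  have hC0 : 0 ≤ C :=
    le_trans (by unfold DRmNorm; positivity) (hD p hp_mem 0 ⟨le_rfl, F.T_pos⟩)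
  obtain ⟨M, hM0, hM⟩ := exists_forall_ξ_le hp hRm
  have hdiff : ∀ t ∈ Ico 0 F.T, ∀ x ∈ Icc p q,
      DifferentiableAt ℝ (fun x => F.logMonomial α β x t) x := fun t ht x hx =>
    (hasDerivAt_logMonomial_radial (hpos x hx) ht).differentiableAt
  have hgap_persists : ∀ t ∈ Ico 0 F.T,
      η ≤ F.logMonomial α β q t - F.logMonomial α β p t := by
    intro t ht
    have hq := abs_le.1 (abs_logMonomial_sub_initial_le (α := α) (β := β)
      (hpos q hq_mem) (hRm q hq_mem) ht)
    have hp := abs_le.1 (abs_logMonomial_sub_initial_le (α := α) (β := β)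
      (hpos p hp_mem) (hRm p hp_mem) ht)
    linarith [hq.1, hp.2]
  obtain ⟨x, hx, s, hs, hslope⟩ := exists_forall_deriv_ge_of_image_sub_ge hpq F.T_pos hη
    (fun t ht x hx => (hdiff t ht x hx).continuousAt.continuousWithinAt)
    (fun t ht x hx => (hdiff t ht x (Ioo_subset_Icc_self hx)).differentiableWithinAt)
    hgap_persists
    (fun x hx s hs t ht => abs_deriv_logMonomial_sub_le hp hM0.le hC0 hM hD hx hs ht)
  have hx' := Ioo_subset_Icc_self hx
  have hδ : 0 < η / (2 * (q - p)) := div_pos hη (mul_pos two_pos (sub_pos.2 hpq))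
  refine ⟨x, hx, M⁻¹ * (η / (2 * (q - p))), mul_pos (inv_pos.2 hM0) hδ, s, hs, fun t ht => ?_⟩
  have ht' : t ∈ Ico 0 F.T := ⟨hs.1.trans ht.1, ht.2⟩
  have hξ := F.ξ_pos x (hpos x hx') t ht'
  rw [dS]
  gcongr
  exacts [hM x hx' t ht', hslope t ht]

theorem exists_forall_dS_logMonomial_ge {R : ℝ} (hR : 0 < R)
    (hRm : ∀ x ≥ R, ∀ t ∈ Ico 0 F.T, F.RmNorm x t ≤ K)
    (hD : ∀ q, ∃ C, ∀ x ∈ Icc R q, ∀ t ∈ Ico 0 F.T, F.DRmNorm x t ≤ C)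
    (hunbdd : ∀ B, ∃ᶠ x in atTop, B ≤ F.logMonomial α β x 0) :
    ∃ x > R, ∃ δ > 0, ∃ s ∈ Ico 0 F.T, ∀ t ∈ Ico s F.T,
      δ ≤ dS F.ξ (F.logMonomial α β) x t := by
  obtain ⟨q, hgap, hRq⟩ :=
    ((hunbdd (F.logMonomial α β R 0 + (2 * ((|α| + 2 * |β|) * K * F.T) + 1))).and_eventually
      (eventually_gt_atTop R)).exists
  obtain ⟨C, hC⟩ := hD q
  obtain ⟨x, hx, hslope⟩ := exists_forall_dS_logMonomial_ge_of_initial_gap hR hRq one_pos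
    (fun x hx => hRm x hx.1) hC (le_sub_iff_add_le'.2 hgap)
  exact ⟨x, hx.1, hslope⟩

theorem exists_forall_bS_ge {R : ℝ} (hR : 0 < R)
    (hRm : ∀ x ≥ R, ∀ t ∈ Ico 0 F.T, F.RmNorm x t ≤ K)
    (hD : ∀ q, ∃ C, ∀ x ∈ Icc R q, ∀ t ∈ Ico 0 F.T, F.DRmNorm x t ≤ C)
    (hb : ∀ B, ∃ᶠ x in atTop, B ≤ F.b x 0) :
    ∃ x > R, ∃ δ > 0, ∃ s ∈ Ico 0 F.T, ∀ t ∈ Ico s F.T, δ ≤ F.bS x t := by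
  have hlog : ∀ B, ∃ᶠ x in atTop, B ≤ F.logMonomial 1 0 x 0 := fun B =>
    ((hb (Real.exp B)).and_eventually (eventually_gt_atTop 0)).mono fun x hx => by
      simpa [logMonomial] using
        (Real.le_log_iff_exp_le (F.b_pos x hx.2 0 ⟨le_rfl, F.T_pos⟩)).2 hx.1
  obtain ⟨x, hx, δ, hδ, s, hs, hslope⟩ := exists_forall_dS_logMonomial_ge hR hRm hD hlog
  have hx0 : 0 < x := hR.trans hx
  have hb0 := F.b_pos x hx0 0 ⟨le_rfl, F.T_pos⟩
  refine ⟨x, hx, F.b x 0 / Real.exp (K * F.T) * δ, by positivity, s, hs, fun t ht => ?_⟩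
  have ht' : t ∈ Ico 0 F.T := ⟨hs.1.trans ht.1, ht.2⟩
  have hbt := F.b_pos x hx0 t ht'
  have hratio : δ ≤ F.bS x t / F.b x t := by
    simpa [dS_logMonomial hx0 ht'] using hslope t ht
  calc F.b x 0 / Real.exp (K * F.T) * δ
      ≤ F.b x t * (F.bS x t / F.b x t) := by
        gcongr
        exact (div_le_iff₀ (Real.exp_pos _)).2 (b_initial_le_b_mul_exp hx0 (hRm x hx.le) ht')
    _ = F.bS x t := mul_div_cancel₀ _ hbt.ne'

theorem exists_forall_meanH_ge {R : ℝ} (hR : 0 < R)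
    (hRm : ∀ x ≥ R, ∀ t ∈ Ico 0 F.T, F.RmNorm x t ≤ K)
    (hD : ∀ q, ∃ C, ∀ x ∈ Icc R q, ∀ t ∈ Ico 0 F.T, F.DRmNorm x t ≤ C)
    (hbbc : ∀ B, ∃ᶠ x in atTop, B ≤ F.b x 0 ^ 2 * F.c x 0) :
    ∃ x > R, ∃ δ > 0, ∃ s ∈ Ico 0 F.T, ∀ t ∈ Ico s F.T, δ ≤ F.meanH x t := by
  have hlog : ∀ B, ∃ᶠ x in atTop, B ≤ F.logMonomial 2 1 x 0 := fun B =>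
    ((hbbc (Real.exp B)).and_eventually (eventually_gt_atTop 0)).mono fun x hx => by
      have hb := F.b_pos x hx.2 0 ⟨le_rfl, F.T_pos⟩
      have hc := F.c_pos x hx.2 0 ⟨le_rfl, F.T_pos⟩
      have h := (Real.le_log_iff_exp_le (by positivity)).2 hx.1
      simpa [logMonomial, Real.log_mul (pow_pos hb 2).ne' hc.ne'] using h
  obtain ⟨x, hx, δ, hδ, s, hs, hslope⟩ := exists_forall_dS_logMonomial_ge hR hRm hD hlog
  refine ⟨x, hx, δ, hδ, s, hs, fun t ht => ?_⟩
  have h := hslope t ht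
  rwa [dS_logMonomial (hR.trans hx) ⟨hs.1.trans ht.1, ht.2⟩, one_mul, ← mul_div_assoc] at h

end WarpedBergerFlow

theorem warpedBerger_bs_H_positive_at_some_radius_general (F : WarpedBergerFlow) {ρ K : ℝ}
    (hρ : 0 < ρ) (hb : ∀ B, ∃ᶠ x in atTop, B ≤ F.b x 0)
    (hbbc : ∀ B, ∃ᶠ x in atTop, B ≤ F.b x 0 ^ 2 * F.c x 0)
    (hRm : ∀ x ≥ ρ, ∀ t ∈ Ico 0 F.T, F.RmNorm x t ≤ K)
    (hDRm : ∀ q, ∃ C, ∀ x ∈ Icc ρ q, ∀ t ∈ Ico 0 F.T, F.DRmNorm x t ≤ C) :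
    ∃ x₁ x₂ δ t', ρ < x₁ ∧ x₁ ≤ x₂ ∧ 0 < δ ∧ t' ∈ Ico 0 F.T ∧
      ∀ t ∈ Ico t' F.T, δ ≤ F.bS x₁ t ∧ δ ≤ F.meanH x₂ t := by
  obtain ⟨x₁, hx₁, δ₁, hδ₁, t₁, ht₁, hbS⟩ := WarpedBergerFlow.exists_forall_bS_ge hρ hRm hDRm hb
  obtain ⟨x₂, hx₂, δ₂, hδ₂, t₂, ht₂, hH⟩ := WarpedBergerFlow.exists_forall_meanH_ge (hρ.trans hx₁)
    (fun x hx => hRm x (hx₁.le.trans hx))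
    (fun q => (hDRm q).imp fun _ hC x hx => hC x ⟨hx₁.le.trans hx.1, hx.2⟩) hbbc
  refine ⟨x₁, x₂, min δ₁ δ₂, max t₁ t₂, hx₁, hx₂.le, lt_min hδ₁ hδ₂,
    ⟨le_max_of_le_left ht₁.1, max_lt ht₁.2 ht₂.2⟩, fun t ht => ⟨?_, ?_⟩⟩
  · exact (min_le_left _ _).trans (hbS t ⟨(le_max_left _ _).trans ht.1, ht.2⟩)
  · exact (min_le_right _ _).trans (hH t ⟨(le_max_right _ _).trans ht.1, ht.2⟩)

/-- for a warped Berger Ricci flow with `T < ∞`, no necks at `t = 0`,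
`b(x,0) → ∞` and `b²c(x,0) → ∞` as `x → ∞`, `|Rm| ≤ 1` and uniformly bounded first
derivatives of the curvature outside radius `ρ` for all times, there exist
`x̃₂ ≥ x̃₁ > ρ`, `δ > 0` and `t̃ ∈ [0,T)` such that `b_s(x̃₁,t) ≥ δ` and `H(x̃₂,t) ≥ δ`
for every `t ∈ [t̃,T)`. -/
theorem warpedBerger_bs_H_positive_at_some_radius (F : WarpedBergerFlow)
    (hBC : F.BoundedCurvature)
    (hbs0 : ∀ x > 0, 0 ≤ F.bS x 0) (hH0 : ∀ x > 0, 0 ≤ F.meanH x 0)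
    (hb_infty : Filter.Tendsto (fun x => F.b x 0) Filter.atTop Filter.atTop)
    (hbbc_infty : Filter.Tendsto (fun x => (F.b x 0) ^ 2 * F.c x 0) Filter.atTop
      Filter.atTop)
    (ρ : ℝ) (hρ : 0 < ρ)
    (hRm : ∀ x ≥ ρ, ∀ t ∈ Set.Ico (0:ℝ) F.T, F.RmNorm x t ≤ 1)
    (hDRm : ∃ C : ℝ, ∀ x ≥ ρ, ∀ t ∈ Set.Ico (0:ℝ) F.T,
      |dS F.ξ F.k12 x t| + |dS F.ξ F.k13 x t| + |dS F.ξ F.k01 x t|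
        + |dS F.ξ F.k03 x t| ≤ C) :
    ∃ x₁ x₂ δ t', ρ < x₁ ∧ x₁ ≤ x₂ ∧ 0 < δ ∧ t' ∈ Set.Ico (0:ℝ) F.T ∧
      ∀ t ∈ Set.Ico t' F.T, δ ≤ F.bS x₁ t ∧ δ ≤ F.meanH x₂ t :=
  warpedBerger_bs_H_positive_at_some_radius_general F hρ
    (fun B => (hb_infty.eventually_ge_atTop B).frequently)
    (fun B => (hbbc_infty.eventually_ge_atTop B).frequently) hRm
    fun _ => hDRm.imp fun _ hC x hx => hC x hx.1
end
end
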